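/- Assume (Σ_n, T, (φ_n)) satisfies property (H*) with Hölder parameter r. Then for every k ∈ ℕ₀ and all Borel probability measures μ_{k+n_k}, ν_{k+n_k} on Σ_{k+n_k}, one has W_k((ℒ^{n_k}_k)*(μ_{k+n_k}), (ℒ^{n_k}_k)*(ν_{k+n_k})) ≤ W_{k+n_k}(μ_{k+n_k}, ν_{k+n_k}), i.e. the dual Ruelle operator over n_k steps does not increase the Vasershtein distance with respect to the metrics d̄. -/

import Mathlib

open MeasureTheory Real Filter

namespace NSShift

/-- The ambient sequence space `ℕ^ℕ`. -/
abbrev Seq := ℕ → ℕ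

/-- The shift map `T`. -/
def shift (x : Seq) : Seq := fun i => x (i + 1)

/-- Prepend one symbol to a sequence. -/
def cons (a : ℕ) (x : Seq) : Seq := fun i =>
  match i with
  | 0 => a
  | j + 1 => x j

/-- The non-stationary shift space `Σ_n` determined by alphabets `W` and
transition relations `A` (`A n i j` means `α^n_{ij} = 1`). -/
def Sig (W : ℕ → Set ℕ) (A : ℕ → ℕ → ℕ → Prop) (n : ℕ) : Set Seq :=
  {x | (∀ i, x i ∈ W (n + i)) ∧ ∀ i, A (n + i) (x i) (x (i + 1))}

/-- `x` and `y` agree in their first `k` coordinates (lie in a common `k`-cylinder). -/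
def agrees (x y : Seq) (k : ℕ) : Prop := ∀ i < k, x i = y i

open scoped Classical in
/-- The shift metric `d_r(x,y) = r^{min{i : x_i ≠ y_i}}`. -/
noncomputable def dr (r : ℝ) (x y : Seq) : ℝ :=
  if x = y then 0 else r ^ sInf {i | x i ≠ y i}

/-- `f` is locally `(r,m)`-Hölder continuous with Hölder constant `κ` of index `m` on `S`:
`V_k(f) ≤ κ r^k` for all `k ≥ m`. -/
def HolderOn (S : Set Seq) (r κ : ℝ) (m : ℕ) (f : Seq → ℝ) : Prop :=
  ∀ k, m ≤ k → ∀ x ∈ S, ∀ y ∈ S, agrees x y k → |f x - f y| ≤ κ * r ^ k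

/-- The Birkhoff sum `S_n(φ_k) = Σ_{i=0}^{n-1} φ_{k+i} ∘ T^i`. -/
noncomputable def birkhoff (φ : ℕ → Seq → ℝ) (k n : ℕ) (x : Seq) : ℝ :=
  ∑ i ∈ Finset.range n, φ (k + i) (shift^[i] x)

/-- `log B_m = Σ_{i=1}^{m} κ_{m−i} r^i`. -/
noncomputable def logB (κ : ℕ → ℝ) (r : ℝ) (m : ℕ) : ℝ :=
  ∑ i ∈ Finset.Icc 1 m, κ (m - i) * r ^ i

/-- `B_m = exp Σ_{i=1}^{m} κ_{m−i} r^i`. -/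
noncomputable def Bconst (κ : ℕ → ℝ) (r : ℝ) (m : ℕ) : ℝ := Real.exp (logB κ r m)


open scoped Classical in
/-- The Ruelle operator `ℒ_k(f)(x) = Σ_{Ty=x} e^{φ_k(y)} f(y)`, for `x ∈ Σ_{k+1}`. -/
noncomputable def Ruelle (W : ℕ → Set ℕ) (A : ℕ → ℕ → ℕ → Prop) (φ : ℕ → Seq → ℝ)
    (k : ℕ) (f : Seq → ℝ) (x : Seq) : ℝ :=
  ∑' a : ℕ, if cons a x ∈ Sig W A k then Real.exp (φ k (cons a x)) * f (cons a x) else 0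

/-- The iterated Ruelle operator `ℒ^n_k = ℒ_{k+n-1} ∘ ⋯ ∘ ℒ_k`. -/
noncomputable def RuelleIter (W : ℕ → Set ℕ) (A : ℕ → ℕ → ℕ → Prop) (φ : ℕ → Seq → ℝ)
    (k : ℕ) : ℕ → (Seq → ℝ) → Seq → ℝ
  | 0 => fun f => f
  | n + 1 => fun f => Ruelle W A φ (k + n) (RuelleIter W A φ k n f)

/-- `w` is a `k`-admissible word of length `len`. -/
def Adm (W : ℕ → Set ℕ) (A : ℕ → ℕ → ℕ → Prop) (k : ℕ) (w : ℕ → ℕ) (len : ℕ) : Prop :=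
  (∀ i < len, w i ∈ W (k + i)) ∧ ∀ i, i + 1 < len → A (k + i) (w i) (w (i + 1))

/-- Prepend the first `len` symbols of `w` to the sequence `x` (the inverse branch `τ_w`). -/
def prepend (w : ℕ → ℕ) (len : ℕ) (x : Seq) : Seq := fun i =>
  if i < len then w i else x (i - len)

/-- The Lipschitz constant of `f` on `S` with respect to the distance function `d`,
as the least constant `K ≥ 0` with `|f x − f y| ≤ K d(x,y)` on `S`. -/
noncomputable def LipC (S : Set Seq) (d : Seq → Seq → ℝ) (f : Seq → ℝ) : ℝ :=
  sInf {K : ℝ | 0 ≤ K ∧ ∀ x ∈ S, ∀ y ∈ S, |f x - f y| ≤ K * d x y}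

/-- The Vasershtein (Wasserstein) distance of two Borel measures with respect to the
cost function `d`, as the infimum of `∫ d dm` over couplings `m`. -/
noncomputable def Wass (d : Seq → Seq → ℝ) (μ ν : Measure Seq) : ℝ :=
  sInf {t : ℝ | ∃ m : Measure (Seq × Seq),
    m.map Prod.fst = μ ∧ m.map Prod.snd = ν ∧ t = ∫ p, d p.1 p.2 ∂m}

/-- The dual Ruelle operator `ℒ^*_k` on Borel measures, satisfying
`∫ f d(ℒ^*_k μ) = ∫ ℒ_k(f) dμ`. -/
noncomputable def dualRuelle (W : ℕ → Set ℕ) (A : ℕ → ℕ → ℕ → Prop) (φ : ℕ → Seq → ℝ)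
    (k : ℕ) (μ : Measure Seq) : Measure Seq :=
  Measure.sum fun a : ℕ =>
    (μ.withDensity fun x =>
      ENNReal.ofReal ((Sig W A k).indicator (fun y => Real.exp (φ k y)) (cons a x))).map (cons a)

/-- The iterated dual operator `(ℒ^n_k)^* = ℒ^*_k ∘ ⋯ ∘ ℒ^*_{k+n-1}`. -/
noncomputable def dualRuelleIter (W : ℕ → Set ℕ) (A : ℕ → ℕ → ℕ → Prop) (φ : ℕ → Seq → ℝ) :
    (k : ℕ) → ℕ → Measure Seq → Measure Seq
  | _, 0, μ => μ
  | k, n + 1, μ => dualRuelle W A φ k (dualRuelleIter W A φ (k + 1) n μ)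

/-- A non-stationary shift space `((Σ_n), T, (φ_n))` satisfying property `(H*)`, together
with the choices of the constants `β`, `n_k`, base letters `o_k`, mixing times `m_k`,
connecting words `u(x)` and lower bounds `C_k` used in the coupling construction. -/
structure HstarSystem where
  /-- the alphabets `𝒲¹_n` -/
  W : ℕ → Set ℕ
  /-- the transition matrices: `A n i j` iff `α^n_{ij} = 1` -/
  A : ℕ → ℕ → ℕ → Prop
  /-- the potentials `φ_n : Σ_n → ℝ` -/
  φ : ℕ → Seq → ℝ
  /-- the Hölder parameter -/
  r : ℝ
  /-- the parameter `β ∈ (0,1)` -/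
  β : ℝ
  /-- the Hölder constants `κ_n` of `φ_n` -/
  κ : ℕ → ℝ
  /-- the finite set `ℐ` from the big preimages property -/
  I : Finset ℕ
  /-- the infinite set `𝒦` from the big preimages property -/
  K : Set ℕ
  /-- the base letters `o_k ∈ 𝒲¹_k` -/
  o : ℕ → ℕ
  /-- the integers `n_k` -/
  nseq : ℕ → ℕ
  /-- the mixing times `m_k` -/
  mseq : ℕ → ℕ
  /-- the connecting words `u(x) ∈ 𝒲^{m_k}_k` (as sequences; only the first `m_k`
  symbols are relevant) -/
  u : ℕ → Seq → Seq
  /-- the constants `C_k` -/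
  Cseq : ℕ → ℝ
  hr : 0 < r ∧ r < 1
  hβ : 0 < β ∧ β < 1
  κnonneg : ∀ n, 0 ≤ κ n
  hKinf : K.Infinite
  /-- no zero rows -/
  row : ∀ n, ∀ i ∈ W n, ∃ j ∈ W (n + 1), A n i j
  /-- no zero columns -/
  col : ∀ n, ∀ i ∈ W (n + 1), ∃ j ∈ W n, A n j i
  /-- topological mixing -/
  mixing : ∀ k : ℕ, ∀ a ∈ W k, ∀ b : ℕ, ∃ N : ℕ, ∀ n, N ≤ n → b ∈ W (k + n) →
    ∃ x ∈ Sig W A k, x 0 = a ∧ x n = b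
  /-- big preimages along `𝒦` -/
  bigPre : ∀ n ∈ K, 1 ≤ n → ∀ a ∈ W n, ∃ b ∈ I, (b : ℕ) ∈ W (n - 1) ∧ A (n - 1) b a
  /-- `ℒ_n(1) = 1` -/
  normalized : ∀ k, ∀ x ∈ Sig W A (k + 1), Ruelle W A φ k (fun _ => 1) x = 1
  /-- `φ_n` is locally `(r,2)`-Hölder for `n ∉ 𝒦` -/
  holder2 : ∀ n ∉ K, HolderOn (Sig W A n) r (κ n) 2 (φ n)
  /-- `φ_n` is locally `(r,1)`-Hölder for `n ∈ 𝒦` -/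
  holder1 : ∀ n ∈ K, HolderOn (Sig W A n) r (κ n) 1 (φ n)
  ho : ∀ k, o k ∈ W k
  /-- `n_k ≥ ⌊−log α_k / log r⌋ + 1` where `α_k = B_k/β` -/
  hn : ∀ k, (⌊-Real.log (Bconst κ r k / β) / Real.log r⌋ + 1 : ℤ) ≤ (nseq k : ℤ)
  /-- `m_k ≥ 1`, `k + m_k ∈ 𝒦` -/
  hm_mem : ∀ k, 1 ≤ mseq k ∧ k + mseq k ∈ K
  /-- `(A_k ⋯ A_{k+m_k−2})_{o_k j} ≥ 1` for all `j ∈ ℐ ∩ 𝒲¹_{k+m_k−1}` -/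
  hm_conn : ∀ k, ∀ j ∈ I, (j : ℕ) ∈ W (k + mseq k - 1) →
    ∃ w : ℕ → ℕ, Adm W A k w (mseq k) ∧ w 0 = o k ∧ w (mseq k - 1) = j
  /-- minimality of `m_k` -/
  hm_min : ∀ k n, (1 ≤ n ∧ k + n ∈ K ∧ ∀ j ∈ I, (j : ℕ) ∈ W (k + n - 1) →
      ∃ w : ℕ → ℕ, Adm W A k w n ∧ w 0 = o k ∧ w (n - 1) = j) → mseq k ≤ n
  /-- the connecting word `u(x)` starts at `o_k`, ends in `ℐ`, and
  `x ∈ T^{m_k}([u(x)]_k)` -/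
  hu : ∀ k, ∀ x ∈ Sig W A (k + mseq k), prepend (u k x) (mseq k) x ∈ Sig W A k ∧
    u k x 0 = o k ∧ u k x (mseq k - 1) ∈ I
  hC_pos : ∀ k, 0 < Cseq k
  /-- `C_k` is a lower bound for `e^{S_{m_k} φ_k (τ_{u(x)} x)}` -/
  hC_le : ∀ k, ∀ x ∈ Sig W A (k + mseq k),
    Cseq k ≤ Real.exp (birkhoff φ k (mseq k) (prepend (u k x) (mseq k) x))

namespace HstarSystem

variable (S : HstarSystem)

/-- `α_k := B_k / β`. -/
noncomputable def alphaC (k : ℕ) : ℝ := Bconst S.κ S.r k / S.β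

/-- the metric `d̄_k(x,y) := min{1, α_k d_r(x,y)}`. -/
noncomputable def dbar (k : ℕ) (x y : Seq) : ℝ := min 1 (S.alphaC k * dr S.r x y)

/-- `s_k := 1 − (1 − r^{n_k} α_k) C_{k+n_k}/B_{k+n_k}`. -/
noncomputable def sconst (k : ℕ) : ℝ :=
  1 - (1 - S.r ^ S.nseq k * S.alphaC k) * S.Cseq (k + S.nseq k) / Bconst S.κ S.r (k + S.nseq k)

/-- `t_k := max{β, s_k}`. -/
noncomputable def tconst (k : ℕ) : ℝ := max S.β (S.sconst k)

/-- `l_k := n_k + m_{k+n_k}`. -/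
def lconst (k : ℕ) : ℕ := S.nseq k + S.mseq (k + S.nseq k)

end HstarSystem

/-! The maximal coupling of two probability vectors `P`, `Q` moves only the mass `∑ (P a - Q a)⁺`.
Applied to the branch weights `e^{φ_k(ax)}` and `e^{φ_k(ay)}` at each pair `(x, y)`, it lifts a
coupling of `μ` and `ν` to a coupling of their images under the dual Ruelle operator. If `x` and
`y` share their first symbol, the part kept on the diagonal is contracted by `r`, and by Hölder
continuity the moved mass is at most `κ_k r d_r(x, y)`; otherwise `d_r(x, y) = 1` and a truncated
metric `min {1, c d_r}` with `c ≥ 1` has nothing to gain. So the distance at scale `c` after one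
step is at most the distance at scale `max {1, r (c + κ_k)}` before it. Over `n_k` steps
`r ^ n_k α_k ≤ 1` absorbs the initial scale, and the Hölder constants add up to at most
`log B_{k + n_k} ≤ B_{k + n_k} - 1`. -/

open scoped ENNReal

section MaximalCoupling

variable {ι : Type*} {P Q : ι → ℝ≥0∞}

lemma tsum_tsub_comm (hPQ : ∑' a, P a = ∑' a, Q a) (hP : ∑' a, P a ≠ ⊤) :
    ∑' a, (P a - Q a) = ∑' a, (Q a - P a) := by
  have split (P Q : ι → ℝ≥0∞) : ∑' a, (P a - Q a) + ∑' a, min (P a) (Q a) = ∑' a, P a := by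
    simp only [← ENNReal.tsum_add, tsub_add_min]
  have hmin : ∑' a, min (P a) (Q a) ≠ ⊤ :=
    ne_top_of_le_ne_top hP (ENNReal.tsum_le_tsum fun _ => min_le_left _ _)
  refine (ENNReal.add_left_inj hmin).1 ?_
  rw [split, hPQ, ← split Q P]
  simp only [min_comm]

variable [DecidableEq ι]

/-- The maximal coupling of two mass functions `P` and `Q` of equal total mass: the common mass
`min P Q` stays on the diagonal, and the excess of `P` over `Q` is matched independently with the
excess of `Q` over `P`. When `P = Q` the inverse is `⊤`, but it is multiplied by `0`. -/
noncomputable def maximalCoupling (P Q : ι → ℝ≥0∞) (a b : ι) : ℝ≥0∞ :=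
  (if a = b then min (P a) (Q a) else 0) + (P a - Q a) * (Q b - P b) * (∑' c, (P c - Q c))⁻¹

lemma maximalCoupling_swap (hPQ : ∑' a, P a = ∑' a, Q a) (hP : ∑' a, P a ≠ ⊤) (a b : ι) :
    maximalCoupling P Q a b = maximalCoupling Q P b a := by
  rw [maximalCoupling, maximalCoupling, tsum_tsub_comm hPQ hP, mul_comm (P a - Q a)]
  congr 1
  by_cases hab : a = b
  · subst hab
    simp only [min_comm]
  · simp only [if_neg hab, if_neg (Ne.symm hab)]

lemma tsum_maximalCoupling_right (hPQ : ∑' a, P a = ∑' a, Q a) (hP : ∑' a, P a ≠ ⊤) (a : ι) :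
    ∑' b, maximalCoupling P Q a b = P a := by
  have moved : (P a - Q a) * (∑' c, (P c - Q c)) * (∑' c, (P c - Q c))⁻¹ = P a - Q a := by
    rcases eq_or_ne (∑' c, (P c - Q c)) 0 with h0 | h0
    · rw [ENNReal.tsum_eq_zero.1 h0 a, zero_mul, zero_mul]
    · have htop : ∑' c, (P c - Q c) ≠ ⊤ :=
        ne_top_of_le_ne_top hP (ENNReal.tsum_le_tsum fun _ => tsub_le_self)
      rw [mul_assoc, ENNReal.mul_inv_cancel h0 htop, mul_one]
  simp only [maximalCoupling]
  rw [ENNReal.tsum_add, tsum_ite_eq', ENNReal.tsum_mul_right, ENNReal.tsum_mul_left,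
    ← tsum_tsub_comm hPQ hP, moved, add_comm, tsub_add_min]

lemma tsum_maximalCoupling_left (hPQ : ∑' a, P a = ∑' a, Q a) (hP : ∑' a, P a ≠ ⊤) (b : ι) :
    ∑' a, maximalCoupling P Q a b = Q b := by
  simp only [maximalCoupling_swap hPQ hP]
  exact tsum_maximalCoupling_right hPQ.symm (hPQ ▸ hP) b

lemma tsum_maximalCoupling_mul_le_tsum (hPQ : ∑' a, P a = ∑' a, Q a) (hP : ∑' a, P a ≠ ⊤)
    {F : ι → ι → ℝ≥0∞} (hF : ∀ a b, F a b ≤ 1) :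
    ∑' a, ∑' b, maximalCoupling P Q a b * F a b ≤ ∑' a, P a := by
  calc ∑' a, ∑' b, maximalCoupling P Q a b * F a b
      ≤ ∑' a, ∑' b, maximalCoupling P Q a b :=
        ENNReal.tsum_le_tsum fun a => ENNReal.tsum_le_tsum fun b =>
          mul_le_of_le_one_right' (hF a b)
    _ = ∑' a, P a := by simp only [tsum_maximalCoupling_right hPQ hP]

lemma tsum_maximalCoupling_mul_le_add (hPQ : ∑' a, P a = ∑' a, Q a) (hP : ∑' a, P a ≠ ⊤)
    {F : ι → ι → ℝ≥0∞} (hF : ∀ a b, F a b ≤ 1) {e : ℝ≥0∞} (hdiag : ∀ a, F a a ≤ e) :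
    ∑' a, ∑' b, maximalCoupling P Q a b * F a b ≤ (∑' a, P a) * e + ∑' a, (P a - Q a) := by
  set R := ∑' a, (P a - Q a) with hR
  have entry (a b : ι) : maximalCoupling P Q a b * F a b ≤
      (if b = a then P a * e else 0) + (P a - Q a) * (Q b - P b) * R⁻¹ := by
    rw [maximalCoupling, add_mul]
    refine add_le_add ?_ (mul_le_of_le_one_right' (hF a b))
    by_cases hab : a = b
    · subst hab
      simp only [if_true]
      exact mul_le_mul' (min_le_left _ _) (hdiag a)
    · simp only [if_neg hab, if_neg (Ne.symm hab), zero_mul, le_refl]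
  calc ∑' a, ∑' b, maximalCoupling P Q a b * F a b
      ≤ ∑' a, ∑' b, ((if b = a then P a * e else 0) + (P a - Q a) * (Q b - P b) * R⁻¹) :=
        ENNReal.tsum_le_tsum fun a => ENNReal.tsum_le_tsum fun b => entry a b
    _ = (∑' a, P a) * e + R * (R * R⁻¹) := by
        simp only [ENNReal.tsum_add, tsum_ite_eq, ENNReal.tsum_mul_right, ENNReal.tsum_mul_left,
          ← tsum_tsub_comm hPQ hP, ← hR, mul_assoc]
    _ ≤ (∑' a, P a) * e + R := by
        gcongr
        exact mul_le_of_le_one_right' (ENNReal.mul_inv_le_one R)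

lemma measurable_maximalCoupling {X : Type*} [MeasurableSpace X] [Countable ι]
    {p q : ι → X → ℝ≥0∞} (hp : ∀ a, Measurable (p a)) (hq : ∀ a, Measurable (q a)) (a b : ι) :
    Measurable fun x => maximalCoupling (p · x) (q · x) a b := by
  have diag : Measurable fun x => if a = b then min (p a x) (q a x) else 0 :=
    Measurable.ite (.const _) ((hp a).min (hq a)) measurable_const
  have total : Measurable fun x => ∑' c, (p c x - q c x) :=
    Measurable.tsum fun c => (hp c).sub (hq c)
  exact diag.add ((((hp a).sub (hq a)).mul ((hq b).sub (hp b))).mul total.inv)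

end MaximalCoupling

section BranchTransfer

variable {ι X Y : Type*} [MeasurableSpace X] [MeasurableSpace Y]

/-- The image of `μ` under countably many branches `τ i`, the `i`-th one being weighted by `p i`:
the dual of the transfer operator `f ↦ ∑ i, p i * (f ∘ τ i)`. -/
noncomputable def branchTransfer (τ : ι → X → Y) (p : ι → X → ℝ≥0∞) (μ : Measure X) : Measure Y :=
  Measure.sum fun i => (μ.withDensity (p i)).map (τ i)

variable [Countable ι] {τ : ι → X → Y} {p : ι → X → ℝ≥0∞}

lemma measurable_tsum_mul_comp (hτ : ∀ i, Measurable (τ i)) (hp : ∀ i, Measurable (p i))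
    {f : Y → ℝ≥0∞} (hf : Measurable f) : Measurable fun x => ∑' i, p i x * f (τ i x) :=
  .tsum fun i => (hp i).mul (hf.comp (hτ i))

lemma lintegral_branchTransfer (hτ : ∀ i, Measurable (τ i)) (hp : ∀ i, Measurable (p i))
    (μ : Measure X) {f : Y → ℝ≥0∞} (hf : Measurable f) :
    ∫⁻ y, f y ∂branchTransfer τ p μ = ∫⁻ x, ∑' i, p i x * f (τ i x) ∂μ := by
  rw [branchTransfer, lintegral_sum_measure, lintegral_tsum
    (f := fun i x => p i x * f (τ i x)) fun i => ((hp i).mul (hf.comp (hτ i))).aemeasurable]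
  refine tsum_congr fun i => ?_
  rw [lintegral_map hf (hτ i)]
  exact lintegral_withDensity_eq_lintegral_mul μ (hp i) (hf.comp (hτ i))

lemma isProbabilityMeasure_branchTransfer (hτ : ∀ i, Measurable (τ i))
    (hp : ∀ i, Measurable (p i)) {μ : Measure X} [IsProbabilityMeasure μ]
    (hsum : ∀ᵐ x ∂μ, ∑' i, p i x = 1) : IsProbabilityMeasure (branchTransfer τ p μ) := by
  refine ⟨?_⟩
  rw [← lintegral_one, lintegral_branchTransfer hτ hp μ measurable_const]
  simp only [mul_one]
  rw [lintegral_congr_ae hsum, lintegral_one, measure_univ]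

variable [DecidableEq ι]

/-- The lift of `branchTransfer τ p` to measures on pairs: over `(x, y)` the branches for `x` and
`y` are drawn from the maximal coupling of their weight vectors. -/
noncomputable def coupledTransfer (τ : ι → X → Y) (p : ι → X → ℝ≥0∞) (m : Measure (X × X)) :
    Measure (Y × Y) :=
  branchTransfer (fun i : ι × ι => Prod.map (τ i.1) (τ i.2))
    (fun i z => maximalCoupling (p · z.1) (p · z.2) i.1 i.2) m

lemma lintegral_coupledTransfer (hτ : ∀ i, Measurable (τ i)) (hp : ∀ i, Measurable (p i))
    (m : Measure (X × X)) {f : Y × Y → ℝ≥0∞} (hf : Measurable f) :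
    ∫⁻ w, f w ∂coupledTransfer τ p m =
      ∫⁻ z, ∑' a, ∑' b, maximalCoupling (p · z.1) (p · z.2) a b * f (τ a z.1, τ b z.2) ∂m := by
  have hweight (i : ι × ι) :
      Measurable fun z : X × X => maximalCoupling (p · z.1) (p · z.2) i.1 i.2 :=
    measurable_maximalCoupling (fun a => (hp a).comp measurable_fst)
      (fun a => (hp a).comp measurable_snd) i.1 i.2
  rw [coupledTransfer,
    lintegral_branchTransfer (fun i => (hτ i.1).prodMap (hτ i.2)) hweight m hf]
  simp only [ENNReal.tsum_prod', Prod.map]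

lemma map_fst_coupledTransfer (hτ : ∀ i, Measurable (τ i)) (hp : ∀ i, Measurable (p i))
    {m : Measure (X × X)} (h₁ : ∀ᵐ z ∂m, ∑' i, p i z.1 = 1) (h₂ : ∀ᵐ z ∂m, ∑' i, p i z.2 = 1) :
    (coupledTransfer τ p m).map Prod.fst = branchTransfer τ p (m.map Prod.fst) := by
  refine Measure.ext_of_lintegral _ fun f hf => ?_
  rw [lintegral_map hf measurable_fst,
    lintegral_coupledTransfer hτ hp m (f := fun w => f w.1) (hf.comp measurable_fst),
    lintegral_branchTransfer hτ hp _ hf,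
    lintegral_map (measurable_tsum_mul_comp hτ hp hf) measurable_fst]
  refine lintegral_congr_ae ?_
  filter_upwards [h₁, h₂] with z hz₁ hz₂
  simp only [ENNReal.tsum_mul_right,
    tsum_maximalCoupling_right (hz₁.trans hz₂.symm) (hz₁ ▸ ENNReal.one_ne_top)]

lemma map_snd_coupledTransfer (hτ : ∀ i, Measurable (τ i)) (hp : ∀ i, Measurable (p i))
    {m : Measure (X × X)} (h₁ : ∀ᵐ z ∂m, ∑' i, p i z.1 = 1) (h₂ : ∀ᵐ z ∂m, ∑' i, p i z.2 = 1) :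
    (coupledTransfer τ p m).map Prod.snd = branchTransfer τ p (m.map Prod.snd) := by
  refine Measure.ext_of_lintegral _ fun f hf => ?_
  rw [lintegral_map hf measurable_snd,
    lintegral_coupledTransfer hτ hp m (f := fun w => f w.2) (hf.comp measurable_snd),
    lintegral_branchTransfer hτ hp _ hf,
    lintegral_map (measurable_tsum_mul_comp hτ hp hf) measurable_snd]
  refine lintegral_congr_ae ?_
  filter_upwards [h₁, h₂] with z hz₁ hz₂
  rw [ENNReal.tsum_comm]
  simp only [ENNReal.tsum_mul_right,
    tsum_maximalCoupling_left (hz₁.trans hz₂.symm) (hz₁ ▸ ENNReal.one_ne_top)]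

end BranchTransfer

section ShiftMetric

variable {x y : Seq} {r : ℝ}

lemma cons_injective (a : ℕ) : Function.Injective (cons a) := fun _ _ h =>
  funext fun i => congrFun h (i + 1)

lemma measurable_cons (a : ℕ) : Measurable (cons a) := by
  refine measurable_pi_iff.2 fun i => ?_
  cases i with
  | zero => exact measurable_const
  | succ j => exact measurable_pi_apply j

lemma agrees_cons (a : ℕ) {k : ℕ} (h : agrees x y k) : agrees (cons a x) (cons a y) (k + 1) := by
  rintro (_ | i) hi
  · rfl
  · exact h i (Nat.lt_of_succ_lt_succ hi)

lemma dr_nonneg (hr : 0 ≤ r) (x y : Seq) : 0 ≤ dr r x y := by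
  unfold dr
  split_ifs
  · exact le_rfl
  · exact pow_nonneg hr _

lemma dr_eq_one_of_head_ne (h : x 0 ≠ y 0) : dr r x y = 1 := by
  have hfirst : sInf {i | x i ≠ y i} = 0 := Nat.sInf_eq_zero.2 (Or.inl h)
  rw [dr, if_neg fun hxy => h (congrFun hxy 0), hfirst, pow_zero]

lemma dr_cons (r : ℝ) (a : ℕ) (x y : Seq) : dr r (cons a x) (cons a y) = r * dr r x y := by
  by_cases hxy : x = y
  · subst hxy
    simp only [dr, if_true, mul_zero]
  have hcons : cons a x ≠ cons a y := (cons_injective a).ne hxy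
  have hpos : 1 ≤ sInf {i | cons a x i ≠ cons a y i} := by
    refine le_csInf (Function.ne_iff.1 hcons) fun i hi => Nat.one_le_iff_ne_zero.2 ?_
    rintro rfl
    exact hi rfl
  rw [dr, dr, if_neg hxy, if_neg hcons, ← pow_succ']
  exact congrArg (r ^ ·) (Nat.sInf_add hpos).symm

lemma measurable_dr (r : ℝ) : Measurable fun z : Seq × Seq => dr r z.1 z.2 := by
  classical
  have hdiff (z : Seq × Seq) : ∃ i, z.1 i ≠ z.2 i ∨ z.1 = z.2 := by
    by_cases hz : z.1 = z.2
    · exact ⟨0, .inr hz⟩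
    · exact (Function.ne_iff.1 hz).imp fun _ => .inl
  have hdiag : MeasurableSet {z : Seq × Seq | z.1 = z.2} :=
    measurableSet_eq_fun measurable_fst measurable_snd
  have hcoord (i : ℕ) : MeasurableSet {z : Seq × Seq | z.1 i ≠ z.2 i} :=
    (measurableSet_eq_fun ((measurable_pi_apply i).comp measurable_fst)
      ((measurable_pi_apply i).comp measurable_snd)).compl
  have hfind : (fun z : Seq × Seq => dr r z.1 z.2) =
      fun z => if z.1 = z.2 then 0 else r ^ Nat.find (hdiff z) := by
    funext z
    by_cases hz : z.1 = z.2
    · rw [dr, if_pos hz, if_pos hz]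
    · have hne : {i | z.1 i ≠ z.2 i}.Nonempty := Function.ne_iff.1 hz
      have hfirst : sInf {i | z.1 i ≠ z.2 i} = Nat.find (hdiff z) :=
        le_antisymm (Nat.sInf_le ((Nat.find_spec (hdiff z)).resolve_right hz))
          (Nat.find_min' (hdiff z) (.inl (Nat.sInf_mem hne)))
      rw [dr, if_neg hz, if_neg hz, hfirst]
  rw [hfind]
  exact .ite hdiag measurable_const <| (Measurable.of_discrete (f := (r ^ · : ℕ → ℝ))).comp <|
    measurable_find hdiff fun i => (hcoord i).union hdiag

end ShiftMetric

section HolderOn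

variable {Λ : Set Seq} {r κ : ℝ} {m : ℕ} {f : Seq → ℝ}

lemma HolderOn.mono {m' : ℕ} (hf : HolderOn Λ r κ m f) (hm : m ≤ m') : HolderOn Λ r κ m' f :=
  fun k hk => hf k (hm.trans hk)

lemma HolderOn.abs_sub_le_mul_dr (hf : HolderOn Λ r κ m f) {x y : Seq} (hx : x ∈ Λ) (hy : y ∈ Λ)
    (hxy : agrees x y m) : |f x - f y| ≤ κ * dr r x y := by
  by_cases heq : x = y
  · subst heq
    simp only [dr, sub_self, abs_zero, if_true, mul_zero, le_refl]
  have hm : m ≤ sInf {i | x i ≠ y i} := le_csInf (Function.ne_iff.1 heq) fun i hi =>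
    not_lt.1 fun him => hi (hxy i him)
  rw [dr, if_neg heq]
  exact hf _ hm x hx y hy fun i hi => not_not.1 (Nat.notMem_of_lt_sInf hi)

lemma HolderOn.continuousOn (hf : HolderOn Λ r κ m f) (hr₀ : 0 ≤ r) (hr₁ : r < 1) :
    ContinuousOn f Λ := by
  intro x hx
  refine Metric.tendsto_nhds.2 fun ε hε => ?_
  have hlim : Tendsto (fun k => κ * r ^ k) atTop (nhds 0) := by
    simpa only [mul_zero] using (tendsto_pow_atTop_nhds_zero_of_lt_one hr₀ hr₁).const_mul κ
  obtain ⟨k, hkε, hmk⟩ := ((hlim.eventually_lt_const hε).and (eventually_ge_atTop m)).exists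
  have hcylinder : {y : Seq | ∀ i ∈ Set.Iio k, y i ∈ ({x i} : Set ℕ)} ∈ nhds x :=
    set_pi_mem_nhds (Set.finite_Iio k) fun i _ => (isOpen_discrete _).mem_nhds rfl
  filter_upwards [mem_nhdsWithin_of_mem_nhds hcylinder, self_mem_nhdsWithin] with y hy hyΛ
  exact (hf k hmk y hyΛ x hx hy).trans_lt hkε

end HolderOn

section TruncatedMetric

variable {r c c' : ℝ}

/-- The truncated shift metric `min {1, c d_r(x, y)}` at scale `c`; `d̄_k` is the case
`c = α_k`. -/
noncomputable def truncDist (r c : ℝ) (x y : Seq) : ℝ := min 1 (c * dr r x y)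

lemma truncDist_nonneg (hr : 0 ≤ r) (hc : 0 ≤ c) (x y : Seq) : 0 ≤ truncDist r c x y :=
  le_min zero_le_one (mul_nonneg hc (dr_nonneg hr x y))

lemma truncDist_le_one (r c : ℝ) (x y : Seq) : truncDist r c x y ≤ 1 := min_le_left _ _

lemma truncDist_mono (hr : 0 ≤ r) (hcc' : c ≤ c') (x y : Seq) :
    truncDist r c x y ≤ truncDist r c' x y :=
  min_le_min_left 1 (mul_le_mul_of_nonneg_right hcc' (dr_nonneg hr x y))

lemma measurable_truncDist (r c : ℝ) : Measurable fun z : Seq × Seq => truncDist r c z.1 z.2 :=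
  measurable_const.min ((measurable_dr r).const_mul c)

end TruncatedMetric

section Wass

variable {d d' : Seq → Seq → ℝ} {μ ν μ' ν' : Measure Seq}

lemma Wass_le_integral (hd : ∀ x y, 0 ≤ d x y) {m : Measure (Seq × Seq)}
    (hm₁ : m.map Prod.fst = μ) (hm₂ : m.map Prod.snd = ν) : Wass d μ ν ≤ ∫ z, d z.1 z.2 ∂m := by
  refine csInf_le ⟨0, ?_⟩ ⟨m, hm₁, hm₂, rfl⟩
  rintro _ ⟨q, -, -, rfl⟩
  exact integral_nonneg fun z => hd z.1 z.2

lemma le_Wass [IsProbabilityMeasure μ] [IsProbabilityMeasure ν] {t : ℝ}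
    (h : ∀ m : Measure (Seq × Seq), IsProbabilityMeasure m → m.map Prod.fst = μ →
      m.map Prod.snd = ν → t ≤ ∫ z, d z.1 z.2 ∂m) : t ≤ Wass d μ ν := by
  refine le_csInf ⟨_, μ.prod ν, ?_, ?_, rfl⟩ ?_
  · rw [Measure.map_fst_prod, measure_univ, one_smul]
  · rw [Measure.map_snd_prod, measure_univ, one_smul]
  · rintro _ ⟨m, hm₁, hm₂, rfl⟩
    have : IsProbabilityMeasure (m.map Prod.fst) := hm₁ ▸ ‹_›
    exact h m (Measure.isProbabilityMeasure_of_map Prod.fst) hm₁ hm₂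

lemma Wass_le_Wass_of_coupling [IsProbabilityMeasure μ] [IsProbabilityMeasure ν]
    (hd : ∀ x y, 0 ≤ d x y) (hdm : Measurable fun z : Seq × Seq => d z.1 z.2)
    (hd' : ∀ x y, 0 ≤ d' x y) (hd'm : Measurable fun z : Seq × Seq => d' z.1 z.2)
    (hd'₁ : ∀ x y, d' x y ≤ 1)
    (h : ∀ m : Measure (Seq × Seq), m.map Prod.fst = μ → m.map Prod.snd = ν →
      ∃ m' : Measure (Seq × Seq), m'.map Prod.fst = μ' ∧ m'.map Prod.snd = ν' ∧
        ∫⁻ z, .ofReal (d z.1 z.2) ∂m' ≤ ∫⁻ z, .ofReal (d' z.1 z.2) ∂m) :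
    Wass d μ' ν' ≤ Wass d' μ ν := by
  refine le_Wass fun m _ hm₁ hm₂ => ?_
  obtain ⟨m', hm'₁, hm'₂, hcost⟩ := h m hm₁ hm₂
  refine (Wass_le_integral hd hm'₁ hm'₂).trans ?_
  have integral_eq {e : Seq → Seq → ℝ} (he : ∀ x y, 0 ≤ e x y)
      (hem : Measurable fun z : Seq × Seq => e z.1 z.2) (q : Measure (Seq × Seq)) :
      ∫ z, e z.1 z.2 ∂q = (∫⁻ z, .ofReal (e z.1 z.2) ∂q).toReal :=
    integral_eq_lintegral_of_nonneg_ae (.of_forall fun z => he z.1 z.2) hem.aestronglyMeasurable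
  have hfinite : ∫⁻ z, .ofReal (d' z.1 z.2) ∂m ≠ ⊤ := by
    refine ne_top_of_le_ne_top ENNReal.one_ne_top ?_
    calc ∫⁻ z, .ofReal (d' z.1 z.2) ∂m ≤ ∫⁻ _, 1 ∂m :=
          lintegral_mono fun z => ENNReal.ofReal_le_one.2 (hd'₁ z.1 z.2)
      _ = 1 := by rw [lintegral_one, measure_univ]
  rw [integral_eq hd hdm, integral_eq hd' hd'm]
  exact ENNReal.toReal_mono hfinite hcost

lemma Wass_truncDist_mono [IsProbabilityMeasure μ] [IsProbabilityMeasure ν] {r c c' : ℝ}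
    (hr : 0 ≤ r) (hc : 0 ≤ c) (hcc' : c ≤ c') :
    Wass (truncDist r c) μ ν ≤ Wass (truncDist r c') μ ν :=
  Wass_le_Wass_of_coupling (truncDist_nonneg hr hc) (measurable_truncDist r c)
    (truncDist_nonneg hr (hc.trans hcc')) (measurable_truncDist r c') (truncDist_le_one r c')
    fun m hm₁ hm₂ => ⟨m, hm₁, hm₂, lintegral_mono fun z =>
      ENNReal.ofReal_le_ofReal (truncDist_mono hr hcc' z.1 z.2)⟩

end Wass

section DualRuelle

variable {W : ℕ → Set ℕ} {A : ℕ → ℕ → ℕ → Prop} {φ : ℕ → Seq → ℝ} {k : ℕ}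

lemma measurableSet_Sig (W : ℕ → Set ℕ) (A : ℕ → ℕ → ℕ → Prop) (k : ℕ) :
    MeasurableSet (Sig W A k) := by
  have hSig : Sig W A k = (⋂ i, (fun x : Seq => x i) ⁻¹' W (k + i)) ∩
      ⋂ i, (fun x : Seq => (x i, x (i + 1))) ⁻¹' {q | A (k + i) q.1 q.2} := by
    ext x
    simp only [Sig, Set.mem_inter_iff, Set.mem_iInter, Set.mem_preimage, Set.mem_ofPred_eq]
  rw [hSig]
  exact (MeasurableSet.iInter fun i => measurable_pi_apply i .of_discrete).inter <|
    MeasurableSet.iInter fun i =>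
      (measurable_pi_apply i).prodMk (measurable_pi_apply (i + 1)) .of_discrete

lemma cons_mem_Sig_iff {a : ℕ} {x : Seq} :
    cons a x ∈ Sig W A k ↔ a ∈ W k ∧ A k a (x 0) ∧ x ∈ Sig W A (k + 1) := by
  have letters : (∀ i, cons a x i ∈ W (k + i)) ↔ a ∈ W k ∧ ∀ i, x i ∈ W (k + 1 + i) := by
    rw [← Nat.and_forall_add_one]
    simp only [Nat.add_right_comm k 1, Nat.add_assoc, cons, Nat.add_zero]
  have transitions : (∀ i, A (k + i) (cons a x i) (cons a x (i + 1))) ↔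
      A k a (x 0) ∧ ∀ i, A (k + 1 + i) (x i) (x (i + 1)) := by
    rw [← Nat.and_forall_add_one]
    simp only [Nat.add_right_comm k 1, Nat.add_assoc, cons, Nat.add_zero]
  exact (and_congr letters transitions).trans (by rw [and_and_and_comm, and_assoc]; rfl)

/-- The weight `e^{φ_k(ax)}` of the branch `x ↦ ax` of the dual Ruelle operator, set to `0` when
`ax ∉ Σ_k`. -/
noncomputable def branchWeight (W : ℕ → Set ℕ) (A : ℕ → ℕ → ℕ → Prop) (φ : ℕ → Seq → ℝ)
    (k a : ℕ) (x : Seq) : ℝ≥0∞ :=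
  .ofReal ((Sig W A k).indicator (fun y => Real.exp (φ k y)) (cons a x))

lemma dualRuelle_eq_branchTransfer (μ : Measure Seq) :
    dualRuelle W A φ k μ = branchTransfer cons (branchWeight W A φ k) μ := rfl

lemma measurable_branchWeight (hφ : ContinuousOn (φ k) (Sig W A k)) (a : ℕ) :
    Measurable (branchWeight W A φ k a) := by
  classical
  have hexp : ContinuousOn (fun y => Real.exp (φ k y)) (Sig W A k) :=
    Real.continuous_exp.comp_continuousOn hφ
  have hind : Measurable ((Sig W A k).indicator fun y => Real.exp (φ k y)) := by
    rw [← Set.piecewise_eq_indicator]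
    exact hexp.measurable_piecewise continuousOn_const (measurableSet_Sig W A k)
  exact (hind.comp (measurable_cons a)).ennreal_ofReal

lemma tsum_branchWeight {x : Seq} (hx : Ruelle W A φ k (fun _ => 1) x = 1) :
    ∑' a, branchWeight W A φ k a x = 1 := by
  have hsum : ∑' a, (Sig W A k).indicator (fun y => Real.exp (φ k y)) (cons a x) = 1 := by
    classical
    simpa only [Ruelle, mul_one, Set.indicator_apply] using hx
  have hsummable :
      Summable fun a => (Sig W A k).indicator (fun y => Real.exp (φ k y)) (cons a x) := by
    by_contra hnot
    exact zero_ne_one ((tsum_eq_zero_of_not_summable hnot).symm.trans hsum)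
  simp only [branchWeight]
  rw [← ENNReal.ofReal_tsum_of_nonneg
    (fun a => Set.indicator_nonneg (fun _ _ => Real.exp_nonneg _) _) hsummable, hsum,
    ENNReal.ofReal_one]

lemma exp_sub_exp_le_exp_mul_sub (s t : ℝ) :
    Real.exp s - Real.exp t ≤ Real.exp s * (s - t) := by
  have htangent : Real.exp s * (t - s + 1) ≤ Real.exp s * Real.exp (t - s) :=
    mul_le_mul_of_nonneg_left (Real.add_one_le_exp _) (Real.exp_nonneg s)
  rw [← Real.exp_add, add_sub_cancel] at htangent
  linarith

lemma branchWeight_tsub_le {r κ : ℝ} (hφ : HolderOn (Sig W A k) r κ 2 (φ k)) (a : ℕ) {x y : Seq}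
    (hy : y ∈ Sig W A (k + 1)) (hxy : x 0 = y 0) :
    branchWeight W A φ k a x - branchWeight W A φ k a y ≤
      branchWeight W A φ k a x * .ofReal (κ * (r * dr r x y)) := by
  by_cases hax : cons a x ∈ Sig W A k
  · obtain ⟨haW, haA, -⟩ := cons_mem_Sig_iff.1 hax
    have hay : cons a y ∈ Sig W A k := cons_mem_Sig_iff.2 ⟨haW, hxy ▸ haA, hy⟩
    have hagree : agrees (cons a x) (cons a y) 2 :=
      agrees_cons a fun i hi => by rwa [Nat.lt_one_iff.1 hi]
    have hosc : φ k (cons a x) - φ k (cons a y) ≤ κ * (r * dr r x y) := by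
      rw [← dr_cons r a]
      exact (le_abs_self _).trans (hφ.abs_sub_le_mul_dr hax hay hagree)
    rw [branchWeight, branchWeight, Set.indicator_of_mem hax, Set.indicator_of_mem hay,
      ← ENNReal.ofReal_sub _ (Real.exp_nonneg _), ← ENNReal.ofReal_mul (Real.exp_nonneg _)]
    exact ENNReal.ofReal_le_ofReal <| (exp_sub_exp_le_exp_mul_sub _ _).trans
      (mul_le_mul_of_nonneg_left hosc (Real.exp_nonneg _))
  · rw [branchWeight, Set.indicator_of_notMem hax, ENNReal.ofReal_zero, zero_tsub, zero_mul]

lemma tsum_branchWeight_tsub_le {r κ : ℝ} (hφ : HolderOn (Sig W A k) r κ 2 (φ k)) {x y : Seq}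
    (hx : Ruelle W A φ k (fun _ => 1) x = 1) (hy : y ∈ Sig W A (k + 1)) (hxy : x 0 = y 0) :
    ∑' a, (branchWeight W A φ k a x - branchWeight W A φ k a y) ≤
      .ofReal (κ * (r * dr r x y)) := by
  refine (ENNReal.tsum_le_tsum fun a => branchWeight_tsub_le hφ a hy hxy).trans_eq ?_
  rw [ENNReal.tsum_mul_right, tsum_branchWeight hx, one_mul]

lemma tsum_maximalCoupling_truncDist_le {r κ c c' : ℝ} (hr : 0 ≤ r) (hκ : 0 ≤ κ)
    (hφ : HolderOn (Sig W A k) r κ 2 (φ k)) (hc : 0 ≤ c) (hc' : 1 ≤ c') (hcc' : r * (c + κ) ≤ c')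
    {x y : Seq} (hx : Ruelle W A φ k (fun _ => 1) x = 1) (hy : Ruelle W A φ k (fun _ => 1) y = 1)
    (hySig : y ∈ Sig W A (k + 1)) :
    ∑' a, ∑' b, maximalCoupling (branchWeight W A φ k · x) (branchWeight W A φ k · y) a b *
      .ofReal (truncDist r c (cons a x) (cons b y)) ≤ .ofReal (truncDist r c' x y) := by
  have hsum := (tsum_branchWeight hx).trans (tsum_branchWeight hy).symm
  have hfin : ∑' a, branchWeight W A φ k a x ≠ ⊤ := tsum_branchWeight hx ▸ ENNReal.one_ne_top
  have hle_one (a b : ℕ) : ENNReal.ofReal (truncDist r c (cons a x) (cons b y)) ≤ 1 :=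
    ENNReal.ofReal_le_one.2 (truncDist_le_one r c _ _)
  have hdr := dr_nonneg hr x y
  rw [truncDist, ENNReal.ofReal_min, ENNReal.ofReal_one]
  have hcost_one := tsum_maximalCoupling_mul_le_tsum hsum hfin hle_one
  rw [tsum_branchWeight hx] at hcost_one
  refine le_min hcost_one ?_
  by_cases hxy : x 0 = y 0
  · have hdiag (a : ℕ) : ENNReal.ofReal (truncDist r c (cons a x) (cons a y)) ≤
        .ofReal (c * (r * dr r x y)) := by
      rw [← dr_cons r a]
      exact ENNReal.ofReal_le_ofReal (min_le_right _ _)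
    calc _ ≤ (∑' a, branchWeight W A φ k a x) * .ofReal (c * (r * dr r x y)) +
          ∑' a, (branchWeight W A φ k a x - branchWeight W A φ k a y) :=
          tsum_maximalCoupling_mul_le_add hsum hfin hle_one hdiag
      _ ≤ .ofReal (c * (r * dr r x y)) + .ofReal (κ * (r * dr r x y)) := by
          rw [tsum_branchWeight hx, one_mul]
          gcongr
          exact tsum_branchWeight_tsub_le hφ hx hySig hxy
      _ = .ofReal (r * (c + κ) * dr r x y) := by
          rw [← ENNReal.ofReal_add (by positivity) (by positivity)]
          ring_nf
      _ ≤ .ofReal (c' * dr r x y) := by gcongr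
  · refine hcost_one.trans (ENNReal.one_le_ofReal.2 ?_)
    rwa [dr_eq_one_of_head_ne hxy, mul_one]

lemma isProbabilityMeasure_dualRuelle (hφ : ContinuousOn (φ k) (Sig W A k))
    (hnorm : ∀ x ∈ Sig W A (k + 1), Ruelle W A φ k (fun _ => 1) x = 1)
    {μ : Measure Seq} [IsProbabilityMeasure μ] (hμ : ∀ᵐ x ∂μ, x ∈ Sig W A (k + 1)) :
    IsProbabilityMeasure (dualRuelle W A φ k μ) :=
  isProbabilityMeasure_branchTransfer measurable_cons (measurable_branchWeight hφ)
    (hμ.mono fun x hx => tsum_branchWeight (hnorm x hx))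

lemma ae_dualRuelle_mem_Sig (hφ : ContinuousOn (φ k) (Sig W A k)) (μ : Measure Seq) :
    ∀ᵐ x ∂dualRuelle W A φ k μ, x ∈ Sig W A k := by
  have hcompl : MeasurableSet (Sig W A k)ᶜ := (measurableSet_Sig W A k).compl
  rw [ae_iff, ← Set.compl_def, ← lintegral_indicator_one hcompl, dualRuelle_eq_branchTransfer,
    lintegral_branchTransfer measurable_cons (measurable_branchWeight hφ) μ
      (measurable_one.indicator hcompl)]
  have hzero (x : Seq) (a : ℕ) :
      branchWeight W A φ k a x * (Sig W A k)ᶜ.indicator 1 (cons a x) = 0 := by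
    by_cases ha : cons a x ∈ Sig W A k
    · rw [Set.indicator_of_notMem (Set.notMem_compl_iff.2 ha), mul_zero]
    · rw [branchWeight, Set.indicator_of_notMem ha, ENNReal.ofReal_zero, zero_mul]
  simp only [hzero, tsum_zero, lintegral_zero]

theorem Wass_dualRuelle_le {r κ c c' : ℝ} (hr₀ : 0 ≤ r) (hr₁ : r < 1) (hκ : 0 ≤ κ)
    (hφ : HolderOn (Sig W A k) r κ 2 (φ k))
    (hnorm : ∀ x ∈ Sig W A (k + 1), Ruelle W A φ k (fun _ => 1) x = 1)
    (hc : 0 ≤ c) (hc' : 1 ≤ c') (hcc' : r * (c + κ) ≤ c')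
    {μ ν : Measure Seq} [IsProbabilityMeasure μ] [IsProbabilityMeasure ν]
    (hμ : ∀ᵐ x ∂μ, x ∈ Sig W A (k + 1)) (hν : ∀ᵐ x ∂ν, x ∈ Sig W A (k + 1)) :
    Wass (truncDist r c) (dualRuelle W A φ k μ) (dualRuelle W A φ k ν) ≤
      Wass (truncDist r c') μ ν := by
  have hweight := measurable_branchWeight (hφ.continuousOn hr₀ hr₁)
  refine Wass_le_Wass_of_coupling (truncDist_nonneg hr₀ hc) (measurable_truncDist r c)
    (truncDist_nonneg hr₀ (zero_le_one.trans hc')) (measurable_truncDist r c')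
    (truncDist_le_one r c') ?_
  rintro m rfl rfl
  have hm₁ : ∀ᵐ z ∂m, z.1 ∈ Sig W A (k + 1) := ae_of_ae_map measurable_fst.aemeasurable hμ
  have hm₂ : ∀ᵐ z ∂m, z.2 ∈ Sig W A (k + 1) := ae_of_ae_map measurable_snd.aemeasurable hν
  have hsum₁ : ∀ᵐ z ∂m, ∑' a, branchWeight W A φ k a z.1 = 1 :=
    hm₁.mono fun z hz => tsum_branchWeight (hnorm _ hz)
  have hsum₂ : ∀ᵐ z ∂m, ∑' a, branchWeight W A φ k a z.2 = 1 :=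
    hm₂.mono fun z hz => tsum_branchWeight (hnorm _ hz)
  refine ⟨coupledTransfer cons (branchWeight W A φ k) m,
    map_fst_coupledTransfer measurable_cons hweight hsum₁ hsum₂,
    map_snd_coupledTransfer measurable_cons hweight hsum₁ hsum₂, ?_⟩
  rw [lintegral_coupledTransfer measurable_cons hweight m (measurable_truncDist r c).ennreal_ofReal]
  refine lintegral_mono_ae ?_
  filter_upwards [hm₁, hm₂] with z hz₁ hz₂
  exact tsum_maximalCoupling_truncDist_le hr₀ hκ hφ hc hc' hcc' (hnorm _ hz₁) (hnorm _ hz₂) hz₂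

lemma dualRuelleIter_isProbabilityMeasure_and_ae_mem_Sig
    (hφ : ∀ j, ContinuousOn (φ j) (Sig W A j))
    (hnorm : ∀ j, ∀ x ∈ Sig W A (j + 1), Ruelle W A φ j (fun _ => 1) x = 1) (k n : ℕ)
    {μ : Measure Seq} [IsProbabilityMeasure μ] (hμ : ∀ᵐ x ∂μ, x ∈ Sig W A (k + n)) :
    IsProbabilityMeasure (dualRuelleIter W A φ k n μ) ∧
      ∀ᵐ x ∂dualRuelleIter W A φ k n μ, x ∈ Sig W A k := by
  induction n generalizing k with
  | zero => exact ⟨‹_›, hμ⟩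
  | succ n ih =>
    rw [show k + (n + 1) = k + 1 + n from Nat.add_right_comm k n 1] at hμ
    obtain ⟨_, hmem⟩ := ih (k + 1) hμ
    exact ⟨isProbabilityMeasure_dualRuelle (hφ k) (hnorm k) hmem, ae_dualRuelle_mem_Sig (hφ k) _⟩

end DualRuelle

theorem dual_ruelle_wasserstein_nonexpansive_general {W : ℕ → Set ℕ} {A : ℕ → ℕ → ℕ → Prop}
    {φ : ℕ → Seq → ℝ} {r : ℝ} {κ : ℕ → ℝ} (hr₀ : 0 ≤ r) (hr₁ : r < 1) (hκ : ∀ j, 0 ≤ κ j)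
    (hφ : ∀ j, HolderOn (Sig W A j) r (κ j) 2 (φ j))
    (hnorm : ∀ j, ∀ x ∈ Sig W A (j + 1), Ruelle W A φ j (fun _ => 1) x = 1)
    (k n : ℕ) {c c' : ℝ} (hc : 0 ≤ c)
    (hcc' : max 1 (r ^ n * c) + ∑ i ∈ Finset.Icc 1 n, κ (k + n - i) * r ^ i ≤ c')
    (μ ν : Measure Seq) [IsProbabilityMeasure μ] [IsProbabilityMeasure ν]
    (hμ : ∀ᵐ x ∂μ, x ∈ Sig W A (k + n)) (hν : ∀ᵐ x ∂ν, x ∈ Sig W A (k + n)) :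
    Wass (truncDist r c) (dualRuelleIter W A φ k n μ) (dualRuelleIter W A φ k n ν) ≤
      Wass (truncDist r c') μ ν := by
  have hcont (j : ℕ) : ContinuousOn (φ j) (Sig W A j) := (hφ j).continuousOn hr₀ hr₁
  induction n generalizing k c with
  | zero =>
    change Wass (truncDist r c) μ ν ≤ _
    refine Wass_truncDist_mono hr₀ hc (le_trans ?_ hcc')
    simp only [pow_zero, one_mul, Finset.Icc_eq_empty_of_lt Nat.zero_lt_one, Finset.sum_empty,
      add_zero, le_max_right]
  | succ n ih =>
    have hidx : k + (n + 1) = k + 1 + n := Nat.add_right_comm k n 1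
    rw [hidx] at hμ hν
    obtain ⟨_, hμ'⟩ := dualRuelleIter_isProbabilityMeasure_and_ae_mem_Sig hcont hnorm (k + 1) n hμ
    obtain ⟨_, hν'⟩ := dualRuelleIter_isProbabilityMeasure_and_ae_mem_Sig hcont hnorm (k + 1) n hν
    have hscale : max 1 (r ^ n * max 1 (r * (c + κ k))) ≤
        max 1 (r ^ (n + 1) * c) + κ k * r ^ (n + 1) := by
      have hpow : r ^ n ≤ 1 := pow_le_one₀ hr₀ hr₁.le
      have hnonneg : 0 ≤ κ k * r ^ (n + 1) := mul_nonneg (hκ k) (pow_nonneg hr₀ _)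
      have h₁ := le_max_left 1 (r ^ (n + 1) * c)
      have h₂ := le_max_right 1 (r ^ (n + 1) * c)
      rw [mul_max_of_nonneg _ _ (pow_nonneg hr₀ n)]
      refine max_le ?_ (max_le ?_ ?_)
      · linarith
      · linarith
      · linear_combination h₂
    refine (Wass_dualRuelle_le hr₀ hr₁ (hκ k) (hφ k) (hnorm k) hc (le_max_left _ _)
      (le_max_right _ _) hμ' hν').trans (ih (k + 1) (le_max_of_le_left zero_le_one) ?_ hμ hν)
    rw [Finset.sum_Icc_succ_top n.succ_pos, Nat.add_sub_cancel, hidx] at hcc'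
    linarith

lemma sum_Icc_mul_pow_le_logB {κ : ℕ → ℝ} {r : ℝ} (hκ : ∀ j, 0 ≤ κ j) (hr : 0 ≤ r) (k n : ℕ) :
    ∑ i ∈ Finset.Icc 1 n, κ (k + n - i) * r ^ i ≤ logB κ r (k + n) :=
  Finset.sum_le_sum_of_subset_of_nonneg (Finset.Icc_subset_Icc_right (Nat.le_add_left n k))
    fun _ _ _ => mul_nonneg (hκ _) (pow_nonneg hr _)

namespace HstarSystem

lemma holderOn (S : HstarSystem) (j : ℕ) : HolderOn (Sig S.W S.A j) S.r (S.κ j) 2 (S.φ j) := by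
  by_cases hj : j ∈ S.K
  · exact (S.holder1 j hj).mono one_le_two
  · exact S.holder2 j hj

lemma one_add_logB_le_alphaC (S : HstarSystem) (k : ℕ) : 1 + logB S.κ S.r k ≤ S.alphaC k :=
  calc 1 + logB S.κ S.r k ≤ Bconst S.κ S.r k := by
        rw [add_comm]
        exact Real.add_one_le_exp _
    _ ≤ S.alphaC k := le_div_self (Real.exp_nonneg _) S.hβ.1 S.hβ.2.le

lemma alphaC_pos (S : HstarSystem) (k : ℕ) : 0 < S.alphaC k :=
  div_pos (Real.exp_pos _) S.hβ.1

lemma r_pow_nseq_mul_alphaC_le_one (S : HstarSystem) (k : ℕ) :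
    S.r ^ S.nseq k * S.alphaC k ≤ 1 := by
  have hlog : Real.log S.r < 0 := Real.log_neg S.hr.1 S.hr.2
  have hn : -Real.log (S.alphaC k) / Real.log S.r < S.nseq k := by
    exact_mod_cast Int.floor_lt.1 (Int.lt_iff_add_one_le.2 (S.hn k))
  rw [div_lt_iff_of_neg hlog] at hn
  have hpow : 0 < S.r ^ S.nseq k := pow_pos S.hr.1 _
  rw [← Real.log_nonpos_iff (mul_pos hpow (S.alphaC_pos k)).le,
    Real.log_mul hpow.ne' (S.alphaC_pos k).ne', Real.log_pow]
  linarith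

end HstarSystem

/-- (Lemma, part (iii).) Under property `(H*)`, the dual Ruelle operator over
`n_k` steps does not increase the Vasershtein distance with respect to the metrics `d̄`. -/
theorem dual_ruelle_wasserstein_nonexpansive (S : HstarSystem) (k : ℕ)
    (μ ν : Measure Seq)
    (hμp : IsProbabilityMeasure μ) (hμs : μ (Sig S.W S.A (k + S.nseq k)) = 1)
    (hνp : IsProbabilityMeasure ν) (hνs : ν (Sig S.W S.A (k + S.nseq k)) = 1) :
    Wass (S.dbar k) (dualRuelleIter S.W S.A S.φ k (S.nseq k) μ)
        (dualRuelleIter S.W S.A S.φ k (S.nseq k) ν) ≤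
      Wass (S.dbar (k + S.nseq k)) μ ν := by
  have hscale : max 1 (S.r ^ S.nseq k * S.alphaC k) +
      ∑ i ∈ Finset.Icc 1 (S.nseq k), S.κ (k + S.nseq k - i) * S.r ^ i ≤
        S.alphaC (k + S.nseq k) := by
    rw [max_eq_left (S.r_pow_nseq_mul_alphaC_le_one k)]
    exact (add_le_add_right (sum_Icc_mul_pow_le_logB S.κnonneg S.hr.1.le k _) 1).trans
      (S.one_add_logB_le_alphaC _)
  have hSig : MeasurableSet (Sig S.W S.A (k + S.nseq k)) := measurableSet_Sig _ _ _
  exact dual_ruelle_wasserstein_nonexpansive_general S.hr.1.le S.hr.2 S.κnonneg S.holderOn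
    S.normalized k (S.nseq k) (S.alphaC_pos k).le hscale μ ν
    ((mem_ae_iff_prob_eq_one hSig).2 hμs) ((mem_ae_iff_prob_eq_one hSig).2 hνs)

end NSShift
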